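/- arXiv:2005.09021 — 2 statements merged into one kernel-verified Lean document; each statement's English description precedes it below -/
import Mathlib

section
/- Let β = max_{1≤i≤d} ‖a_i‖₂. If λ > β, then every local minimum of the objective F1_λ(x) = ‖Ax − y‖₂ + λ τ_k(x) is k-sparse. -/
open Finset Filter Topology

/-- Euclidean (ℓ₂) norm of a vector in ℝ^m. -/
noncomputable def l2norm {m : ℕ} (v : Fin m → ℝ) : ℝ := Real.sqrt (∑ i, v i ^ 2)

/-- The trimmed lasso penalty: the minimum, over index sets Λ of size d − k,
of the ℓ₁ norm of x restricted to Λ. -/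
noncomputable def tauTL {d : ℕ} (k : ℕ) (x : Fin d → ℝ) : ℝ :=
  sInf ((fun Λ : Finset (Fin d) => ∑ i ∈ Λ, |x i|) '' {Λ : Finset (Fin d) | Λ.card = d - k})

lemma l2norm_eq_norm {m : ℕ} (v : Fin m → ℝ) : l2norm v = ‖WithLp.toLp 2 v‖ := by
  simp [l2norm, EuclideanSpace.norm_eq]

lemma l2norm_nonneg {m : ℕ} (v : Fin m → ℝ) : 0 ≤ l2norm v := Real.sqrt_nonneg _

lemma l2norm_sub_smul_le {m : ℕ} (u v : Fin m → ℝ) (c : ℝ) :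
    l2norm (u - c • v) ≤ l2norm u + |c| * l2norm v := by
  simp only [l2norm_eq_norm, WithLp.toLp_sub, WithLp.toLp_smul]
  simpa [norm_smul] using norm_sub_le (WithLp.toLp 2 u) (c • WithLp.toLp 2 v)

lemma tauTL_le {d : ℕ} (k : ℕ) (x : Fin d → ℝ) {Λ : Finset (Fin d)} (hΛ : Λ.card = d - k) :
    tauTL k x ≤ ∑ i ∈ Λ, |x i| :=
  csInf_le (Set.toFinite _).bddBelow ⟨Λ, hΛ, rfl⟩

lemma exists_tauTL_eq {d : ℕ} (k : ℕ) (x : Fin d → ℝ) :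
    ∃ Λ : Finset (Fin d), Λ.card = d - k ∧ ∑ i ∈ Λ, |x i| = tauTL k x := by
  obtain ⟨Λ₀, -, hΛ₀⟩ := Finset.exists_subset_card_eq
    (s := (Finset.univ : Finset (Fin d))) (n := d - k) (by simp)
  exact Set.Nonempty.csInf_mem (Set.Nonempty.image _ ⟨Λ₀, hΛ₀⟩) ((Set.toFinite _).image _)

/-- An index set of size `d - k` meets the support of any vector that is not `k`-sparse. -/
lemma exists_mem_ne_zero_of_lt_ncard {d k : ℕ} {x : Fin d → ℝ} {Λ : Finset (Fin d)}
    (hΛ : Λ.card = d - k) (hx : k < Set.ncard {i : Fin d | x i ≠ 0}) : ∃ i ∈ Λ, x i ≠ 0 := by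
  by_contra! h
  have hsub : {i : Fin d | x i ≠ 0} ⊆ ((Λᶜ : Finset (Fin d)) : Set (Fin d)) := fun i hi => by
    simpa using fun hiΛ => hi (h i hiΛ)
  have hcard := Set.ncard_le_ncard hsub (Set.toFinite _)
  rw [Set.ncard_coe_finset, Finset.card_compl, Fintype.card_fin] at hcard
  omega

/-- Shrinking a coordinate in a minimizing index set decreases the penalty accordingly. -/
lemma tauTL_sub_single_le {d k : ℕ} {x : Fin d → ℝ} {Λ : Finset (Fin d)} (hΛ : Λ.card = d - k)
    (hτ : ∑ j ∈ Λ, |x j| = tauTL k x) {i : Fin d} (hi : i ∈ Λ) {t : ℝ} (ht : t ≤ 1) :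
    tauTL k (x - Pi.single i (t * x i)) ≤ tauTL k x - t * |x i| := by
  refine (tauTL_le k _ hΛ).trans_eq ?_
  rw [← hτ, ← Finset.add_sum_erase _ _ hi, ← Finset.add_sum_erase Λ (fun j => |x j|) hi]
  have hrest : ∑ j ∈ Λ.erase i, |(x - Pi.single i (t * x i) : Fin d → ℝ) j| = ∑ j ∈ Λ.erase i, |x j| :=
    Finset.sum_congr rfl fun j hj => by simp [Finset.ne_of_mem_erase hj]
  have hcoord : |(x - Pi.single i (t * x i) : Fin d → ℝ) i| = (1 - t) * |x i| := by
    rw [← abs_of_nonneg (sub_nonneg.2 ht), ← abs_mul]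
    simp [sub_mul]
  rw [hrest, hcoord]
  ring

/-- If λ > β = maxᵢ ‖aᵢ‖₂, then every local minimum of
F1_λ(x) = ‖Ax − y‖₂ + λ τ_k(x) is k-sparse. -/
theorem stmt1 {n d : ℕ} (k : ℕ) (hk : 0 < k) (hkd : k < d)
    (A : Matrix (Fin n) (Fin d) ℝ) (y : Fin n → ℝ) (lam : ℝ)
    (hlam : (⨆ i : Fin d, l2norm (fun j => A j i)) < lam)
    (xstar : Fin d → ℝ)
    (hmin : IsLocalMin
      (fun x : Fin d → ℝ => l2norm (A.mulVec x - y) + lam * tauTL k x) xstar) :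
    Set.ncard {i : Fin d | xstar i ≠ 0} ≤ k := by
  by_contra! hx
  obtain ⟨Λ, hΛ, hτ⟩ := exists_tauTL_eq k xstar
  obtain ⟨i, hi, hxi⟩ := exists_mem_ne_zero_of_lt_ncard hΛ hx
  have hcol : l2norm (fun j => A j i) < lam :=
    (le_ciSup (f := fun i => l2norm (fun j => A j i)) (Set.finite_range _).bddAbove i).trans_lt
      hlam
  have hlam0 : 0 ≤ lam := (l2norm_nonneg _).trans hcol.le
  have hpath : Tendsto (fun t : ℝ => xstar - Pi.single i (t * xstar i)) (𝓝[>] 0) (𝓝 xstar) := by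
    have hcont : Continuous fun t : ℝ => xstar - Pi.single i (t * xstar i) :=
      continuous_const.sub ((continuous_single i).comp (continuous_id.mul continuous_const))
    simpa using (hcont.tendsto 0).mono_left nhdsWithin_le_nhds
  obtain ⟨t, hle, ht0, ht1⟩ :=
    ((hpath.eventually hmin).and (Ioo_mem_nhdsGT (zero_lt_one' ℝ))).exists
  have hpen := mul_le_mul_of_nonneg_left (tauTL_sub_single_le hΛ hτ hi ht1.le) hlam0
  have hres : A.mulVec (xstar - Pi.single i (t * xstar i)) - y =
      (A.mulVec xstar - y) - (t * xstar i) • fun j => A j i := by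
    ext j
    simp [Matrix.mulVec_sub]
    ring
  have hfit := l2norm_sub_smul_le (A.mulVec xstar - y) (fun j => A j i) (t * xstar i)
  rw [← hres, abs_mul, abs_of_pos ht0] at hfit
  have hstrict := mul_lt_mul_of_pos_left hcol (mul_pos ht0 (abs_pos.2 hxi))
  linarith
end

section
/- Suppose every k columns of A are linearly independent. Then for every λ > 0, every γ ∈ [0,∞), and every c ∈ ℝ, the sublevel set { x ∈ ℝ^d : (1/2)‖Ax − y‖₂² + λ τ_{k,γ}(x) ≤ c } is compact, and likewise the sublevel set { x ∈ ℝ^d : (1/2)‖Ax − y‖₂² + λ τ_k(x) ≤ c } of the trimmed-lasso objective is compact. -/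
open Finset Filter Topology

/-- The generalized soft-min penalty τ_{k,γ}; at γ = 0 it equals
((d−k)/d)‖x‖₁. -/
noncomputable def tauGSM {d : ℕ} (k : ℕ) (γ : ℝ) (x : Fin d → ℝ) : ℝ :=
  if γ = 0 then (((d : ℝ) - (k : ℝ)) / (d : ℝ)) * ∑ i, |x i|
  else -(1 / γ) * Real.log ((1 / (d.choose (d - k) : ℝ)) *
    ∑ Λ ∈ Finset.univ.powersetCard (d - k), Real.exp (-γ * ∑ i ∈ Λ, |x i|))

/-- If the columns of `A` outside `Λ` are linearly independent, a vector is determined by its image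
under `A` together with its restriction to `Λ`. -/
theorem mulVecLin_prod_restrict_injective {n d : ℕ} (A : Matrix (Fin n) (Fin d) ℝ)
    (Λ : Finset (Fin d))
    (hind : LinearIndependent ℝ (fun i : (Λᶜ : Finset (Fin d)) => (fun j => A j (i : Fin d)))) :
    Function.Injective
      (A.mulVecLin.prod (LinearMap.funLeft ℝ ℝ (Subtype.val : Λ → Fin d))) := by
  rw [← LinearMap.ker_eq_bot, LinearMap.ker_eq_bot']
  intro x hx
  obtain ⟨hA, hΛ⟩ := Prod.ext_iff.mp hx
  have hzero : ∀ i ∈ Λ, x i = 0 := fun i hi => congrFun hΛ ⟨i, hi⟩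
  have hcompl : ∀ i : (Λᶜ : Finset (Fin d)), x i = 0 := by
    refine Fintype.linearIndependent_iff.mp hind (fun i => x i) ?_
    ext j
    have hj : ∑ i, A j i * x i = 0 := congrFun hA j
    rw [← Finset.sum_add_sum_compl Λ,
      Finset.sum_eq_zero (fun i hi => by rw [hzero i hi, mul_zero]), zero_add,
      ← Finset.sum_coe_sort] at hj
    simpa [Finset.sum_apply, mul_comm] using hj
  ext i
  by_cases hi : i ∈ Λ
  · exact hzero i hi
  · exact hcompl ⟨i, Finset.mem_compl.mpr hi⟩

theorem continuous_l2norm {m : ℕ} : Continuous (l2norm : (Fin m → ℝ) → ℝ) := by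
  unfold l2norm
  fun_prop

theorem abs_apply_le_l2norm {m : ℕ} (v : Fin m → ℝ) (j : Fin m) : |v j| ≤ l2norm v :=
  Real.abs_le_sqrt
    (Finset.single_le_sum (f := fun i => v i ^ 2) (fun _ _ => sq_nonneg _) (Finset.mem_univ j))

theorem continuous_l2norm_mulVec_sub {n d : ℕ} (A : Matrix (Fin n) (Fin d) ℝ) (y : Fin n → ℝ) :
    Continuous fun x : Fin d → ℝ => l2norm (A.mulVec x - y) :=
  continuous_l2norm.comp ((continuous_const.matrix_mulVec continuous_id).sub continuous_const)

/-- Sublevel sets of least squares penalized by the `ℓ₁` norm on `Λ` are compact as soon as the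
columns of `A` outside `Λ` are linearly independent. -/
theorem isCompact_sublevel_restricted_l1 {n d : ℕ} (A : Matrix (Fin n) (Fin d) ℝ)
    (y : Fin n → ℝ) (Λ : Finset (Fin d))
    (hind : LinearIndependent ℝ (fun i : (Λᶜ : Finset (Fin d)) => (fun j => A j (i : Fin d))))
    {lam : ℝ} (hlam : 0 < lam) (c : ℝ) :
    IsCompact {x : Fin d → ℝ |
      (1 / 2) * (l2norm (A.mulVec x - y)) ^ 2 + lam * ∑ i ∈ Λ, |x i| ≤ c} := by
  have hcont := continuous_l2norm_mulVec_sub A y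
  have hemb := LinearMap.isClosedEmbedding_of_injective
    (LinearMap.ker_eq_bot.mpr (mulVecLin_prod_restrict_injective A Λ hind))
  refine (hemb.isCompact_preimage ((isCompact_closedBall y √(2 * c)).prod
    (isCompact_closedBall (0 : Λ → ℝ) (c / lam)))).of_isClosed_subset
    (isClosed_le (by fun_prop) continuous_const) ?_
  intro x hx
  rw [Set.mem_ofPred_eq] at hx
  have hsum : 0 ≤ ∑ i ∈ Λ, |x i| := Finset.sum_nonneg fun _ _ => abs_nonneg _
  have hpen : 0 ≤ lam * ∑ i ∈ Λ, |x i| := mul_nonneg hlam.le hsum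
  have hsq := sq_nonneg (l2norm (A.mulVec x - y))
  have hc : 0 ≤ c := by linarith
  refine ⟨mem_closedBall_iff_norm.mpr ?_, mem_closedBall_zero_iff.mpr ?_⟩
  · refine (pi_norm_le_iff_of_nonneg (Real.sqrt_nonneg _)).mpr fun j => ?_
    exact (abs_apply_le_l2norm (A.mulVec x - y) j).trans (Real.le_sqrt_of_sq_le (by linarith))
  · refine (pi_norm_le_iff_of_nonneg (by positivity)).mpr fun i => ?_
    have hi : |x i| ≤ ∑ i ∈ Λ, |x i| :=
      Finset.single_le_sum (f := fun i => |x i|) (fun _ _ => abs_nonneg _) i.2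
    refine hi.trans ((le_div_iff₀ hlam).mpr ?_)
    linarith

theorem nonempty_powersetCard_sub (d k : ℕ) :
    ((Finset.univ : Finset (Fin d)).powersetCard (d - k)).Nonempty :=
  Finset.powersetCard_nonempty.mpr (by simp)

theorem tauTL_le_sum {d k : ℕ} (x : Fin d → ℝ) {Λ : Finset (Fin d)} (hΛ : Λ.card = d - k) :
    tauTL k x ≤ ∑ i ∈ Λ, |x i| :=
  csInf_le (Set.toFinite _).bddBelow ⟨Λ, hΛ, rfl⟩

theorem exists_sum_eq_tauTL {d : ℕ} (k : ℕ) (x : Fin d → ℝ) :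
    ∃ Λ ∈ Finset.univ.powersetCard (d - k), ∑ i ∈ Λ, |x i| = tauTL k x := by
  obtain ⟨Λ₀, h₀⟩ := nonempty_powersetCard_sub d k
  obtain ⟨Λ, hΛ, h⟩ := Set.Nonempty.csInf_mem
    (s := (fun Λ : Finset (Fin d) => ∑ i ∈ Λ, |x i|) '' {Λ | Λ.card = d - k})
    ⟨_, Λ₀, (Finset.mem_powersetCard.mp h₀).2, rfl⟩ (Set.toFinite _)
  exact ⟨Λ, Finset.mem_powersetCard.mpr ⟨Finset.subset_univ _, hΛ⟩, h⟩

theorem tauTL_le_tauGSM {d : ℕ} (k : ℕ) {γ : ℝ} (hγ : 0 < γ) (x : Fin d → ℝ) :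
    tauTL k x ≤ tauGSM k γ x := by
  set P := (Finset.univ : Finset (Fin d)).powersetCard (d - k) with hP
  have hne : P.Nonempty := nonempty_powersetCard_sub d k
  have hcard : (P.card : ℝ) = (d.choose (d - k) : ℝ) := by simp [hP]
  have hpos : (0 : ℝ) < P.card := by exact_mod_cast hne.card_pos
  have hexp : ∑ Λ ∈ P, Real.exp (-γ * ∑ i ∈ Λ, |x i|) ≤ P.card * Real.exp (-γ * tauTL k x) := by
    rw [← nsmul_eq_mul]
    refine Finset.sum_le_card_nsmul _ _ _ fun Λ hΛ => Real.exp_le_exp.mpr ?_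
    exact mul_le_mul_of_nonpos_left (tauTL_le_sum x (Finset.mem_powersetCard.mp hΛ).2)
      (neg_nonpos.mpr hγ.le)
  have hsum : 0 < ∑ Λ ∈ P, Real.exp (-γ * ∑ i ∈ Λ, |x i|) :=
    Finset.sum_pos (fun _ _ => Real.exp_pos _) hne
  have hlog : Real.log (1 / P.card * ∑ Λ ∈ P, Real.exp (-γ * ∑ i ∈ Λ, |x i|))
      ≤ -γ * tauTL k x := by
    rw [Real.log_le_iff_le_exp (by positivity), one_div, inv_mul_le_iff₀ hpos]
    exact hexp
  rw [tauGSM, if_neg hγ.ne', ← hP, ← hcard, neg_mul, one_div_mul_eq_div, ← neg_div,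
    le_div_iff₀ hγ]
  linarith

theorem continuous_tauGSM {d : ℕ} (k : ℕ) (γ : ℝ) :
    Continuous (tauGSM k γ : (Fin d → ℝ) → ℝ) := by
  unfold tauGSM
  split_ifs
  · fun_prop
  · refine continuous_const.mul (Continuous.log (by fun_prop) fun x => ne_of_gt ?_)
    have hchoose : (0 : ℝ) < d.choose (d - k) := by
      exact_mod_cast Nat.choose_pos (Nat.sub_le d k)
    exact mul_pos (by positivity)
      (Finset.sum_pos (fun _ _ => Real.exp_pos _) (nonempty_powersetCard_sub d k))

/-- If every k columns of A are linearly independent, then for every λ > 0,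
γ ∈ [0,∞) and c ∈ ℝ, the sublevel sets of the GSM-penalized objective and of
the trimmed-lasso objective are compact. -/
theorem stmt18 {n d : ℕ} (k : ℕ) (hk : 0 < k) (hkd : k < d)
    (A : Matrix (Fin n) (Fin d) ℝ) (y : Fin n → ℝ)
    (hind : ∀ s : Finset (Fin d), s.card = k →
      LinearIndependent ℝ (fun i : s => (fun j => A j (i : Fin d))))
    (lam : ℝ) (hlam : 0 < lam) (γ : ℝ) (hγ : 0 ≤ γ) (c : ℝ) :
    IsCompact {x : Fin d → ℝ |
      (1 / 2) * (l2norm (A.mulVec x - y)) ^ 2 + lam * tauGSM k γ x ≤ c} ∧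
    IsCompact {x : Fin d → ℝ |
      (1 / 2) * (l2norm (A.mulVec x - y)) ^ 2 + lam * tauTL k x ≤ c} := by
  have hcompl : ∀ Λ ∈ (Finset.univ : Finset (Fin d)).powersetCard (d - k),
      LinearIndependent ℝ (fun i : (Λᶜ : Finset (Fin d)) => (fun j => A j (i : Fin d))) := by
    intro Λ hΛ
    refine hind _ ?_
    rw [Finset.card_compl, Fintype.card_fin, (Finset.mem_powersetCard.mp hΛ).2]
    omega
  have hTL : IsCompact {x : Fin d → ℝ |
      (1 / 2) * (l2norm (A.mulVec x - y)) ^ 2 + lam * tauTL k x ≤ c} := by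
    convert ((Finset.univ : Finset (Fin d)).powersetCard (d - k)).isCompact_biUnion
      (fun Λ hΛ => isCompact_sublevel_restricted_l1 A y Λ (hcompl Λ hΛ) hlam c) using 1
    ext x
    simp only [Set.mem_ofPred_eq, Set.mem_iUnion, exists_prop]
    constructor
    · intro hx
      obtain ⟨Λ, hΛ, h⟩ := exists_sum_eq_tauTL k x
      exact ⟨Λ, hΛ, by rwa [h]⟩
    · rintro ⟨Λ, hΛ, hx⟩
      have := mul_le_mul_of_nonneg_left
        (tauTL_le_sum x (Finset.mem_powersetCard.mp hΛ).2) hlam.le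
      linarith
  have hclosed : IsClosed {x : Fin d → ℝ |
      (1 / 2) * (l2norm (A.mulVec x - y)) ^ 2 + lam * tauGSM k γ x ≤ c} := by
    have hfit := continuous_l2norm_mulVec_sub A y
    have hpen := continuous_tauGSM (d := d) k γ
    exact isClosed_le (by fun_prop) continuous_const
  refine ⟨?_, hTL⟩
  rcases hγ.eq_or_lt with rfl | hγpos
  · obtain ⟨Λ, hΛ⟩ := nonempty_powersetCard_sub d k
    have hd : (0 : ℝ) < d := by exact_mod_cast hk.trans hkd
    have hsub : (0 : ℝ) < d - k := sub_pos.mpr (by exact_mod_cast hkd)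
    have hw : 0 < lam * (((d : ℝ) - k) / d) := by positivity
    refine (isCompact_sublevel_restricted_l1 A y Λ (hcompl Λ hΛ) hw c).of_isClosed_subset
      hclosed fun x hx => ?_
    rw [Set.mem_ofPred_eq, tauGSM, if_pos rfl, ← mul_assoc lam] at hx
    have := mul_le_mul_of_nonneg_left (Finset.sum_le_sum_of_subset_of_nonneg
      (Finset.subset_univ Λ) fun i _ _ => abs_nonneg (x i)) hw.le
    rw [Set.mem_ofPred_eq]
    linarith
  · refine hTL.of_isClosed_subset hclosed fun x hx => ?_
    have := mul_le_mul_of_nonneg_left (tauTL_le_tauGSM k hγpos x) hlam.le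
    rw [Set.mem_ofPred_eq] at hx ⊢
    linarith
end
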